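/- Let S > 0, r > 0, and let χ : [0,S] × ∂Ω → [0,∞) be continuous. For each λ ∈ [−r,r], let V_λ : (0,S) × Ω → ℝ be continuous and bounded, and let v⁽¹⁾_λ be a classical solution of ∂_t u − Δu + V_λ u = 0 in (0,S) × Ω with lateral boundary values χ and zero initial values. Let (v_λ)_{λ∈[−r,r]} be functions on [0,S] × cl(Ω) with v_0 ≡ 0 such that, for each (t,x) ∈ [0,S] × cl(Ω), the map λ ↦ v_λ(t,x) is continuous on [−r,r] and differentiable on (−r,r) with derivative v⁽¹⁾_λ(t,x). Then, for all (t,x) ∈ [0,S] × cl(Ω), v_λ(t,x) ≥ 0 for every λ ∈ [0,r] and v_λ(t,x) ≤ 0 for every λ ∈ [−r,0]. -/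

import Mathlib

open Set

namespace Paper

noncomputable section

/-- Time derivative `∂ₜu`. -/
def timeDeriv {n : ℕ} (u : ℝ → (Fin n → ℝ) → ℝ) (t : ℝ) (x : Fin n → ℝ) : ℝ :=
  deriv (fun s => u s x) t

/-- Spatial partial derivative `∂ᵢu`. -/
def spatialDeriv {n : ℕ} (u : ℝ → (Fin n → ℝ) → ℝ) (i : Fin n) (t : ℝ) (x : Fin n → ℝ) : ℝ :=
  deriv (fun s => u t (Function.update x i s)) (x i)

/-- Second spatial partial derivative `∂ᵢ∂ⱼu`. -/
def spatialDeriv2 {n : ℕ} (u : ℝ → (Fin n → ℝ) → ℝ) (i j : Fin n) (t : ℝ)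
    (x : Fin n → ℝ) : ℝ :=
  spatialDeriv (spatialDeriv u j) i t x

/-- Laplacian in the space variables. -/
def laplacian {n : ℕ} (u : ℝ → (Fin n → ℝ) → ℝ) (t : ℝ) (x : Fin n → ℝ) : ℝ :=
  ∑ i, spatialDeriv2 u i i t x

/-- Parabolic regularity: `u` is continuous on `[0,S] × cl Ω`, and `∂ₜu` together with all
spatial partial derivatives of `u` up to order 2 exist and are continuous on `(0,S) × Ω`. -/
structure ParabolicRegular {n : ℕ} (Ω : Set (Fin n → ℝ)) (S : ℝ)
    (u : ℝ → (Fin n → ℝ) → ℝ) : Prop where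
  cont : ContinuousOn (fun p : ℝ × (Fin n → ℝ) => u p.1 p.2) (Icc 0 S ×ˢ closure Ω)
  diff_t : ∀ t ∈ Ioo 0 S, ∀ x ∈ Ω, DifferentiableAt ℝ (fun s => u s x) t
  diff_x : ∀ t ∈ Ioo 0 S, ∀ x ∈ Ω, ∀ i,
    DifferentiableAt ℝ (fun s => u t (Function.update x i s)) (x i)
  diff_xx : ∀ t ∈ Ioo 0 S, ∀ x ∈ Ω, ∀ i j,
    DifferentiableAt ℝ (fun s => spatialDeriv u j t (Function.update x i s)) (x i)
  cont_t : ContinuousOn (fun p : ℝ × (Fin n → ℝ) => timeDeriv u p.1 p.2) (Ioo 0 S ×ˢ Ω)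
  cont_x : ∀ i, ContinuousOn (fun p : ℝ × (Fin n → ℝ) => spatialDeriv u i p.1 p.2)
    (Ioo 0 S ×ˢ Ω)
  cont_xx : ∀ i j, ContinuousOn (fun p : ℝ × (Fin n → ℝ) => spatialDeriv2 u i j p.1 p.2)
    (Ioo 0 S ×ˢ Ω)

/-- Classical solution of `∂ₜu − Δu + c u = f` in `(0,S) × Ω` with lateral boundary values `g`
and zero initial values. -/
structure IsClassicalSolution {n : ℕ} (Ω : Set (Fin n → ℝ)) (S : ℝ)
    (c f g u : ℝ → (Fin n → ℝ) → ℝ) extends ParabolicRegular Ω S u : Prop where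
  eqn : ∀ t ∈ Ioo 0 S, ∀ x ∈ Ω, timeDeriv u t x - laplacian u t x + c t x * u t x = f t x
  lateral : ∀ t ∈ Icc 0 S, ∀ x ∈ frontier Ω, u t x = g t x
  initial : ∀ x ∈ closure Ω, u 0 x = 0

/-- `∂_u F` for a semilinear term `F(t,x,u)`. -/
def uDeriv {n : ℕ} (F : ℝ → (Fin n → ℝ) → ℝ → ℝ) (t : ℝ) (x : Fin n → ℝ) (u : ℝ) : ℝ :=
  deriv (F t x) u

/-- `∂_u² F`. -/
def uDeriv2 {n : ℕ} (F : ℝ → (Fin n → ℝ) → ℝ → ℝ) : ℝ → (Fin n → ℝ) → ℝ → ℝ :=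
  uDeriv (uDeriv F)

/-- `∂_u³ F`. -/
def uDeriv3 {n : ℕ} (F : ℝ → (Fin n → ℝ) → ℝ → ℝ) : ℝ → (Fin n → ℝ) → ℝ → ℝ :=
  uDeriv (uDeriv2 F)

/-- `∂_u⁴ F`. -/
def uDeriv4 {n : ℕ} (F : ℝ → (Fin n → ℝ) → ℝ → ℝ) : ℝ → (Fin n → ℝ) → ℝ → ℝ :=
  uDeriv (uDeriv3 F)

/-- `∂ₜF` for `F` depending on `(t,x,u)`. -/
def FtDeriv {n : ℕ} (F : ℝ → (Fin n → ℝ) → ℝ → ℝ) (t : ℝ) (x : Fin n → ℝ) (u : ℝ) : ℝ :=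
  deriv (fun s => F s x u) t

/-- `∂_{xᵢ}F` for `F` depending on `(t,x,u)`. -/
def FxDeriv {n : ℕ} (F : ℝ → (Fin n → ℝ) → ℝ → ℝ) (i : Fin n) (t : ℝ) (x : Fin n → ℝ)
    (u : ℝ) : ℝ :=
  deriv (fun s => F t (Function.update x i s) u) (x i)

/-- `F` is continuous on `[0,S] × cl Ω × ℝ` and continuously differentiable in the last
variable. -/
def C1InU {n : ℕ} (Ω : Set (Fin n → ℝ)) (S : ℝ) (F : ℝ → (Fin n → ℝ) → ℝ → ℝ) : Prop :=
  ContinuousOn (fun p : ℝ × (Fin n → ℝ) × ℝ => F p.1 p.2.1 p.2.2)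
    (Icc 0 S ×ˢ closure Ω ×ˢ (univ : Set ℝ)) ∧
  (∀ t ∈ Icc 0 S, ∀ x ∈ closure Ω, ∀ u : ℝ, DifferentiableAt ℝ (F t x) u) ∧
  ContinuousOn (fun p : ℝ × (Fin n → ℝ) × ℝ => uDeriv F p.1 p.2.1 p.2.2)
    (Icc 0 S ×ˢ closure Ω ×ˢ (univ : Set ℝ))

/-- `F` is continuous and twice continuously differentiable in the last variable. -/
def C2InU {n : ℕ} (Ω : Set (Fin n → ℝ)) (S : ℝ) (F : ℝ → (Fin n → ℝ) → ℝ → ℝ) : Prop :=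
  C1InU Ω S F ∧
  (∀ t ∈ Icc 0 S, ∀ x ∈ closure Ω, ∀ u : ℝ, DifferentiableAt ℝ (uDeriv F t x) u) ∧
  ContinuousOn (fun p : ℝ × (Fin n → ℝ) × ℝ => uDeriv2 F p.1 p.2.1 p.2.2)
    (Icc 0 S ×ˢ closure Ω ×ˢ (univ : Set ℝ))

/-- `‖f‖_{W^{1,∞}} ≤ B` on `[0,S] × cl Ω`, stated componentwise: `f`, `∂ₜf` and all `∂ᵢf`
are bounded by `B` in absolute value. -/
def W1infLE {n : ℕ} (Ω : Set (Fin n → ℝ)) (S : ℝ) (f : ℝ → (Fin n → ℝ) → ℝ) (B : ℝ) : Prop :=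
  ∀ t ∈ Icc 0 S, ∀ x ∈ closure Ω,
    |f t x| ≤ B ∧ |timeDeriv f t x| ≤ B ∧ ∀ i, |spatialDeriv f i t x| ≤ B

/-- `f` has bounded continuous first-order derivatives on `[0,S] × cl Ω`. -/
def C1Bounded {n : ℕ} (Ω : Set (Fin n → ℝ)) (S : ℝ) (f : ℝ → (Fin n → ℝ) → ℝ) : Prop :=
  (∀ t ∈ Icc 0 S, ∀ x ∈ closure Ω, DifferentiableAt ℝ (fun s => f s x) t ∧
    ∀ i, DifferentiableAt ℝ (fun s => f t (Function.update x i s)) (x i)) ∧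
  ContinuousOn (fun p : ℝ × (Fin n → ℝ) => f p.1 p.2) (Icc 0 S ×ˢ closure Ω) ∧
  ContinuousOn (fun p : ℝ × (Fin n → ℝ) => timeDeriv f p.1 p.2) (Icc 0 S ×ˢ closure Ω) ∧
  (∀ i, ContinuousOn (fun p : ℝ × (Fin n → ℝ) => spatialDeriv f i p.1 p.2)
    (Icc 0 S ×ˢ closure Ω)) ∧
  ∃ B, W1infLE Ω S f B

/-- Componentwise bound `‖f‖_* ≤ ε` for the parabolic Schauder norm of
`C([0,S];C^{2+α}(cl Ω)) ∩ C^{1+α/2}([0,S];C(cl Ω))`: sup bounds on `f`, `∂ₜf`, spatial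
derivatives up to order 2, the `α`-Hölder (in `x`) seminorms of the second spatial derivatives,
and the `α/2`-Hölder (in `t`) seminorm of `∂ₜf`. -/
def SchauderLE {n : ℕ} (α : ℝ) (Ω : Set (Fin n → ℝ)) (S : ℝ) (f : ℝ → (Fin n → ℝ) → ℝ)
    (ε : ℝ) : Prop :=
  (∀ t ∈ Icc 0 S, ∀ x ∈ closure Ω,
    |f t x| ≤ ε ∧ |timeDeriv f t x| ≤ ε ∧ (∀ i, |spatialDeriv f i t x| ≤ ε) ∧
    ∀ i j, |spatialDeriv2 f i j t x| ≤ ε) ∧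
  (∀ t ∈ Icc 0 S, ∀ x ∈ closure Ω, ∀ x' ∈ closure Ω, ∀ i j,
    |spatialDeriv2 f i j t x - spatialDeriv2 f i j t x'| ≤ ε * dist x x' ^ α) ∧
  (∀ x ∈ closure Ω, ∀ t ∈ Icc 0 S, ∀ t' ∈ Icc 0 S,
    |timeDeriv f t x - timeDeriv f t' x| ≤ ε * |t - t'| ^ (α / 2))

/-- `G`, `∂ₜG` and the `∂_{xᵢ}G` exist and are continuous on `[0,S] × cl Ω × ℝ`. -/
def C1InTX {n : ℕ} (Ω : Set (Fin n → ℝ)) (S : ℝ) (G : ℝ → (Fin n → ℝ) → ℝ → ℝ) : Prop :=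
  (∀ t ∈ Icc 0 S, ∀ x ∈ closure Ω, ∀ u : ℝ,
    DifferentiableAt ℝ (fun s => G s x u) t ∧
    ∀ i, DifferentiableAt ℝ (fun s => G t (Function.update x i s) u) (x i)) ∧
  ContinuousOn (fun p : ℝ × (Fin n → ℝ) × ℝ => G p.1 p.2.1 p.2.2)
    (Icc 0 S ×ˢ closure Ω ×ˢ (univ : Set ℝ)) ∧
  ContinuousOn (fun p : ℝ × (Fin n → ℝ) × ℝ => FtDeriv G p.1 p.2.1 p.2.2)
    (Icc 0 S ×ˢ closure Ω ×ˢ (univ : Set ℝ)) ∧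
  ∀ i, ContinuousOn (fun p : ℝ × (Fin n → ℝ) × ℝ => FxDeriv G i p.1 p.2.1 p.2.2)
    (Icc 0 S ×ˢ closure Ω ×ˢ (univ : Set ℝ))

/-- `G`, `∂ₜG` and the `∂_{xᵢ}G` are bounded by `κ(|u|)` on `[0,S] × cl Ω`, for every `u`. -/
def BoundedByKappa {n : ℕ} (Ω : Set (Fin n → ℝ)) (S : ℝ) (G : ℝ → (Fin n → ℝ) → ℝ → ℝ)
    (κ : ℝ → ℝ) : Prop :=
  ∀ u : ℝ, ∀ t ∈ Icc 0 S, ∀ x ∈ closure Ω,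
    |G t x u| ≤ κ |u| ∧ |FtDeriv G t x u| ≤ κ |u| ∧ ∀ i, |FxDeriv G i t x u| ≤ κ |u|

/-- The family of solutions of the semilinear problem with boundary data `λχ`, together with
its first and second linearizations in the boundary parameter `λ`. -/
structure SemilinearFamily {n : ℕ} (Ω : Set (Fin n → ℝ)) (S r : ℝ)
    (χ : ℝ → (Fin n → ℝ) → ℝ) (F : ℝ → (Fin n → ℝ) → ℝ → ℝ)
    (v v1 v2 : ℝ → ℝ → (Fin n → ℝ) → ℝ) : Prop where
  sol : ∀ lam ∈ Icc (-r) r, IsClassicalSolution Ω S (fun _ _ => (0 : ℝ))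
      (fun t x => -F t x (v lam t x)) (fun t x => lam * χ t x) (v lam)
  zero : ∀ t ∈ Icc 0 S, ∀ x ∈ closure Ω, v 0 t x = 0
  lin1 : ∀ lam ∈ Icc (-r) r, IsClassicalSolution Ω S
      (fun t x => uDeriv F t x (v lam t x)) (fun _ _ => (0 : ℝ)) χ (v1 lam)
  lin2 : ∀ lam ∈ Icc (-r) r, IsClassicalSolution Ω S
      (fun t x => uDeriv F t x (v lam t x))
      (fun t x => -uDeriv2 F t x (v lam t x) * (v1 lam t x) ^ 2) (fun _ _ => (0 : ℝ)) (v2 lam)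
  cont_lam : ∀ t ∈ Icc 0 S, ∀ x ∈ closure Ω, ContinuousOn (fun lam => v lam t x) (Icc (-r) r)
  deriv1 : ∀ t ∈ Icc 0 S, ∀ x ∈ closure Ω, ∀ lam ∈ Ioo (-r) r,
      HasDerivAt (fun μ => v μ t x) (v1 lam t x) lam
  deriv2 : ∀ t ∈ Icc 0 S, ∀ x ∈ closure Ω, ∀ lam ∈ Ioo (-r) r,
      HasDerivAt (fun μ => v1 μ t x) (v2 lam t x) lam

end

end Paper

open Paper Set

/-!
Each `v⁽¹⁾_λ` is nonnegative by the weak parabolic maximum principle, so `λ ↦ v_λ(t,x)` is monotone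
and its sign is read off from `v_0 = 0`. For the maximum principle, let `m` be a lower bound of the
potential `c`, put `k = 1 - m`, and suppose `u` is negative somewhere. Then `e^{-kt} u` attains a
negative minimum over `[0,T] × cl Ω`, which by the sign of the data lies in `(0,T] × Ω`. There
`∂ₜu ≤ k u` and `Δu ≥ 0`, whence `∂ₜu - Δu + c u ≤ (k + c) u < 0`.
-/

namespace Paper

/-- A classical supersolution of `∂ₜu − Δu + c u = 0` in `(0,S) × Ω` with nonnegative lateral and
initial values: the class of functions for which the weak maximum principle asserts `u ≥ 0`. -/
structure IsClassicalSupersolution {n : ℕ} (Ω : Set (Fin n → ℝ)) (S : ℝ)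
    (c u : ℝ → (Fin n → ℝ) → ℝ) : Prop extends ParabolicRegular Ω S u where
  nonneg_eqn : ∀ t ∈ Ioo 0 S, ∀ x ∈ Ω, 0 ≤ timeDeriv u t x - laplacian u t x + c t x * u t x
  nonneg_lateral : ∀ t ∈ Icc 0 S, ∀ x ∈ frontier Ω, 0 ≤ u t x
  nonneg_initial : ∀ x ∈ closure Ω, 0 ≤ u 0 x

theorem IsClassicalSolution.isClassicalSupersolution {n : ℕ} {Ω : Set (Fin n → ℝ)} {S : ℝ}
    {c f g u : ℝ → (Fin n → ℝ) → ℝ} (hu : IsClassicalSolution Ω S c f g u)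
    (hf : ∀ t ∈ Ioo 0 S, ∀ x ∈ Ω, 0 ≤ f t x)
    (hg : ∀ t ∈ Icc 0 S, ∀ x ∈ frontier Ω, 0 ≤ g t x) :
    IsClassicalSupersolution Ω S c u where
  toParabolicRegular := hu.toParabolicRegular
  nonneg_eqn t ht x hx := (hf t ht x hx).trans_eq (hu.eqn t ht x hx).symm
  nonneg_lateral t ht x hx := (hg t ht x hx).trans_eq (hu.lateral t ht x hx).symm
  nonneg_initial x hx := (hu.initial x hx).ge

theorem deriv_deriv_nonneg_of_isLocalMin {f : ℝ → ℝ} {a : ℝ} (hmin : IsLocalMin f a)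
    (hf : ContinuousAt f a) : 0 ≤ deriv (deriv f) a := by
  by_contra! hneg
  have hmax : IsLocalMax f a := isLocalMax_of_deriv_deriv_neg hneg hmin.deriv_eq_zero hf
  have hconst : f =ᶠ[nhds a] fun _ => f a := by
    filter_upwards [hmin, hmax] with y hle hge using le_antisymm hge hle
  have hzero : deriv (deriv f) a = 0 := by
    rw [hconst.deriv.deriv_eq, deriv_const', deriv_const]
  exact hneg.ne hzero

theorem hasDerivWithinAt_nonpos_of_isLocalMinOn_right {f : ℝ → ℝ} {f' a b : ℝ} (hab : a < b)
    (hmin : IsLocalMinOn f (Icc a b) b) (hf : HasDerivWithinAt f f' (Icc a b) b) : f' ≤ 0 := by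
  have hcone : a - b ∈ posTangentConeAt (Icc a b) b :=
    sub_mem_posTangentConeAt_of_segment_subset (by rw [segment_symm, segment_eq_Icc hab.le])
  have hprod : 0 ≤ (a - b) * f' := by
    simpa using hmin.hasFDerivWithinAt_nonneg hf.hasFDerivWithinAt hcone
  exact nonpos_of_mul_nonneg_right hprod (sub_neg.2 hab)

theorem hasDerivWithinAt_le_mul_of_isMinOn_exp_mul {f : ℝ → ℝ} {f' a b k : ℝ} (hab : a < b)
    (hmin : IsMinOn (fun s => Real.exp (-k * s) * f s) (Icc a b) b)
    (hf : HasDerivWithinAt f f' (Icc a b) b) : f' ≤ k * f b := by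
  have hexp : HasDerivAt (fun s => Real.exp (-k * s)) (Real.exp (-k * b) * -k) b := by
    simpa using ((hasDerivAt_id b).const_mul (-k)).exp
  have hderiv : Real.exp (-k * b) * -k * f b + Real.exp (-k * b) * f' ≤ 0 :=
    hasDerivWithinAt_nonpos_of_isLocalMinOn_right hab hmin.localize
      (hexp.hasDerivWithinAt.mul hf)
  have hprod : Real.exp (-k * b) * (f' - k * f b) ≤ 0 := by linarith
  exact sub_nonpos.1 (nonpos_of_mul_nonpos_right hprod (Real.exp_pos _))

section MaximumPrinciple

variable {n : ℕ} {Ω : Set (Fin n → ℝ)} {S T k t : ℝ} {x : Fin n → ℝ} {c u : ℝ → (Fin n → ℝ) → ℝ}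

theorem laplacian_nonneg_of_isLocalMin (hmin : IsLocalMin (u t) x) (hu : ContinuousAt (u t) x) :
    0 ≤ laplacian u t x := by
  refine Finset.sum_nonneg fun i _ => ?_
  have hupdate : ContinuousAt (Function.update x i) (x i) :=
    (continuous_const.update i continuous_id).continuousAt
  have hline : IsLocalMin (fun s => u t (Function.update x i s)) (x i) :=
    IsLocalMin.comp_continuous (by rwa [Function.update_eq_self]) hupdate
  have hcont : ContinuousAt (fun s => u t (Function.update x i s)) (x i) :=
    ContinuousAt.comp (by rwa [Function.update_eq_self]) hupdate
  simpa only [spatialDeriv2, spatialDeriv, Function.update_idem, Function.update_self] using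
    deriv_deriv_nonneg_of_isLocalMin hline hcont

theorem ParabolicRegular.timeDeriv_le_and_laplacian_nonneg (hu : ParabolicRegular Ω S u)
    (hΩ : IsOpen Ω) (ht : t ∈ Ioo 0 S) (hx : x ∈ Ω)
    (hmin : IsMinOn (fun p : ℝ × (Fin n → ℝ) => Real.exp (-k * p.1) * u p.1 p.2)
      (Icc 0 t ×ˢ Ω) (t, x)) :
    timeDeriv u t x ≤ k * u t x ∧ 0 ≤ laplacian u t x := by
  constructor
  · exact hasDerivWithinAt_le_mul_of_isMinOn_exp_mul ht.1
      (isMinOn_iff.2 fun s hs => isMinOn_iff.1 hmin (s, x) ⟨hs, hx⟩)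
      (hu.diff_t t ht x hx).hasDerivAt.hasDerivWithinAt
  · have hΩx : Ω ∈ nhds x := hΩ.mem_nhds hx
    have hcont : ContinuousAt (u t) x :=
      (hu.cont.comp (f := fun y => (t, y)) (by fun_prop)
        fun y hy => ⟨Ioo_subset_Icc_self ht, subset_closure hy⟩).continuousAt hΩx
    refine laplacian_nonneg_of_isLocalMin ?_ hcont
    filter_upwards [hΩx] with y hy
    exact le_of_mul_le_mul_left (isMinOn_iff.1 hmin (t, y) ⟨right_mem_Icc.2 ht.1.le, hy⟩)
      (Real.exp_pos _)

namespace IsClassicalSupersolution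

theorem exists_isMinOn_exp_mul_of_neg (hu : IsClassicalSupersolution Ω S c u) (hΩ : IsOpen Ω)
    (hΩb : Bornology.IsBounded Ω) (hT : T ∈ Icc 0 S) (hx : x ∈ closure Ω) (hneg : u T x < 0)
    (k : ℝ) :
    ∃ t ∈ Ioc 0 T, ∃ y ∈ Ω, u t y < 0 ∧
      IsMinOn (fun p : ℝ × (Fin n → ℝ) => Real.exp (-k * p.1) * u p.1 p.2)
        (Icc 0 T ×ˢ closure Ω) (t, y) := by
  have hcont : ContinuousOn (fun p : ℝ × (Fin n → ℝ) => Real.exp (-k * p.1) * u p.1 p.2)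
      (Icc 0 T ×ˢ closure Ω) :=
    .mul (by fun_prop) (hu.cont.mono (prod_mono_left (Icc_subset_Icc_right hT.2)))
  have hTx : (T, x) ∈ Icc 0 T ×ˢ closure Ω := ⟨right_mem_Icc.2 hT.1, hx⟩
  obtain ⟨⟨t, y⟩, ⟨ht, hy⟩, hmin⟩ :=
    (isCompact_Icc.prod hΩb.isCompact_closure).exists_isMinOn ⟨_, hTx⟩ hcont
  have huneg : u t y < 0 := by
    have hlt : Real.exp (-k * t) * u t y < 0 :=
      (isMinOn_iff.1 hmin _ hTx).trans_lt (mul_neg_of_pos_of_neg (Real.exp_pos _) hneg)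
    exact neg_of_mul_neg_right hlt (Real.exp_pos _).le
  have htpos : 0 < t := by
    refine ht.1.lt_of_ne ?_
    rintro rfl
    exact huneg.not_ge (hu.nonneg_initial y hy)
  have hyΩ : y ∈ Ω := by
    by_contra hyΩ
    have hyfr : y ∈ frontier Ω := hΩ.frontier_eq ▸ ⟨hy, hyΩ⟩
    exact huneg.not_ge (hu.nonneg_lateral t ⟨ht.1, ht.2.trans hT.2⟩ y hyfr)
  exact ⟨t, ⟨htpos, ht.2⟩, y, hyΩ, huneg, hmin⟩

theorem nonneg_of_lt (hu : IsClassicalSupersolution Ω S c u) (hΩ : IsOpen Ω)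
    (hΩb : Bornology.IsBounded Ω) (hc : ∃ m, ∀ t ∈ Ioo 0 S, ∀ x ∈ Ω, m ≤ c t x)
    (ht : t ∈ Ico 0 S) (hx : x ∈ closure Ω) : 0 ≤ u t x := by
  by_contra! hneg
  obtain ⟨m, hm⟩ := hc
  obtain ⟨s, hs, y, hy, huneg, hmin⟩ :=
    hu.exists_isMinOn_exp_mul_of_neg hΩ hΩb (Ico_subset_Icc_self ht) hx hneg (1 - m)
  have hsS : s ∈ Ioo 0 S := ⟨hs.1, hs.2.trans_lt ht.2⟩
  obtain ⟨htime, hlap⟩ := hu.timeDeriv_le_and_laplacian_nonneg hΩ hsS hy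
    (hmin.on_subset (prod_mono (Icc_subset_Icc_right hs.2) subset_closure))
  have hpos : 0 < 1 - m + c s y := by linarith [hm s hsS y hy]
  have hcontra : 0 ≤ (1 - m + c s y) * u s y := by linarith [hu.nonneg_eqn s hsS y hy]
  exact hcontra.not_gt (mul_neg_of_pos_of_neg hpos huneg)

theorem nonneg (hu : IsClassicalSupersolution Ω S c u) (hΩ : IsOpen Ω)
    (hΩb : Bornology.IsBounded Ω) (hc : ∃ m, ∀ t ∈ Ioo 0 S, ∀ x ∈ Ω, m ≤ c t x)
    (ht : t ∈ Icc 0 S) (hx : x ∈ closure Ω) : 0 ≤ u t x := by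
  obtain rfl | htpos := ht.1.eq_or_lt
  · exact hu.nonneg_initial x hx
  have hcl : closure (Ico 0 S) = Icc 0 S := closure_Ico (htpos.trans_le ht.2).ne
  have hcont : ContinuousOn (fun s => u s x) (closure (Ico 0 S)) :=
    hcl ▸ hu.cont.comp (f := fun s => (s, x)) (by fun_prop) fun s hs => ⟨hs, hx⟩
  exact le_on_closure (fun s hs => hu.nonneg_of_lt hΩ hΩb hc hs hx) continuousOn_const hcont
    (hcl ▸ ht)

end IsClassicalSupersolution

end MaximumPrinciple

end Paper

theorem statement3_general {n : ℕ} {Ω : Set (Fin n → ℝ)} (hΩo : IsOpen Ω)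
    (hΩb : Bornology.IsBounded Ω) {S r : ℝ} {V v v1 : ℝ → ℝ → (Fin n → ℝ) → ℝ}
    (hVb : ∀ lam ∈ Ioo (-r) r, ∃ m, ∀ t ∈ Ioo 0 S, ∀ x ∈ Ω, m ≤ V lam t x)
    (hv1 : ∀ lam ∈ Ioo (-r) r, IsClassicalSupersolution Ω S (V lam) (v1 lam))
    (hv0 : ∀ t ∈ Icc 0 S, ∀ x ∈ closure Ω, v 0 t x = 0)
    (hcont : ∀ t ∈ Icc 0 S, ∀ x ∈ closure Ω,
      ContinuousOn (fun lam => v lam t x) (Icc (-r) r))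
    (hderiv : ∀ t ∈ Icc 0 S, ∀ x ∈ closure Ω, ∀ lam ∈ Ioo (-r) r,
      HasDerivAt (fun μ => v μ t x) (v1 lam t x) lam) :
    ∀ t ∈ Icc 0 S, ∀ x ∈ closure Ω,
      (∀ lam ∈ Icc 0 r, 0 ≤ v lam t x) ∧ (∀ lam ∈ Icc (-r) 0, v lam t x ≤ 0) := by
  intro t ht x hx
  have hmono : MonotoneOn (fun lam => v lam t x) (Icc (-r) r) := by
    refine monotoneOn_of_hasDerivWithinAt_nonneg (f' := fun lam => v1 lam t x) (convex_Icc _ _)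
      (hcont t ht x hx) ?_ ?_ <;> rw [interior_Icc] <;> intro lam hlam
    · exact (hderiv t ht x hx lam hlam).hasDerivWithinAt
    · exact (hv1 lam hlam).nonneg hΩo hΩb (hVb lam hlam) ht hx
  refine ⟨fun lam hlam => ?_, fun lam hlam => ?_⟩ <;> rw [← hv0 t ht x hx]
  · have hr : 0 ≤ r := hlam.1.trans hlam.2
    exact hmono ⟨neg_nonpos.2 hr, hr⟩ ⟨(neg_nonpos.2 hr).trans hlam.1, hlam.2⟩ hlam.1
  · have hr : 0 ≤ r := neg_nonpos.1 (hlam.1.trans hlam.2)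
    exact hmono ⟨hlam.1, hlam.2.trans hr⟩ ⟨neg_nonpos.2 hr, hr⟩ hlam.2

/-- sign of the solutions `v_λ`: if for each `λ ∈ [−r,r]` the function
`v⁽¹⁾_λ` solves the linear problem with potential `V_λ` and nonnegative boundary data `χ`,
`v_0 ≡ 0`, and `λ ↦ v_λ(t,x)` is continuous on `[−r,r]` and differentiable on `(−r,r)` with
derivative `v⁽¹⁾_λ(t,x)`, then `v_λ ≥ 0` for `λ ∈ [0,r]` and `v_λ ≤ 0` for `λ ∈ [−r,0]`. -/
theorem statement3 {n : ℕ} (hn : 2 ≤ n) (Ω : Set (Fin n → ℝ)) (hΩo : IsOpen Ω)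
    (hΩb : Bornology.IsBounded Ω) (hΩc : IsConnected Ω)
    (S r : ℝ) (hS : 0 < S) (hr : 0 < r)
    (χ : ℝ → (Fin n → ℝ) → ℝ)
    (hχc : ContinuousOn (fun p : ℝ × (Fin n → ℝ) => χ p.1 p.2) (Icc 0 S ×ˢ frontier Ω))
    (hχ0 : ∀ t ∈ Icc 0 S, ∀ x ∈ frontier Ω, 0 ≤ χ t x)
    (V : ℝ → ℝ → (Fin n → ℝ) → ℝ)
    (v v1 : ℝ → ℝ → (Fin n → ℝ) → ℝ)
    (hVc : ∀ lam ∈ Icc (-r) r,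
      ContinuousOn (fun p : ℝ × (Fin n → ℝ) => V lam p.1 p.2) (Ioo 0 S ×ˢ Ω))
    (hVb : ∀ lam ∈ Icc (-r) r, ∃ C, ∀ t ∈ Ioo 0 S, ∀ x ∈ Ω, |V lam t x| ≤ C)
    (hv1 : ∀ lam ∈ Icc (-r) r,
      IsClassicalSolution Ω S (V lam) (fun _ _ => (0 : ℝ)) χ (v1 lam))
    (hv0 : ∀ t ∈ Icc 0 S, ∀ x ∈ closure Ω, v 0 t x = 0)
    (hcont : ∀ t ∈ Icc 0 S, ∀ x ∈ closure Ω,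
      ContinuousOn (fun lam => v lam t x) (Icc (-r) r))
    (hderiv : ∀ t ∈ Icc 0 S, ∀ x ∈ closure Ω, ∀ lam ∈ Ioo (-r) r,
      HasDerivAt (fun μ => v μ t x) (v1 lam t x) lam) :
    ∀ t ∈ Icc 0 S, ∀ x ∈ closure Ω,
      (∀ lam ∈ Icc (0 : ℝ) r, 0 ≤ v lam t x) ∧ (∀ lam ∈ Icc (-r) (0 : ℝ), v lam t x ≤ 0) := by
  have hbelow : ∀ lam ∈ Ioo (-r) r, ∃ m, ∀ t ∈ Ioo 0 S, ∀ x ∈ Ω, m ≤ V lam t x := fun lam hlam =>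
    let ⟨C, hC⟩ := hVb lam (Ioo_subset_Icc_self hlam)
    ⟨-C, fun t ht x hx => (abs_le.1 (hC t ht x hx)).1⟩
  exact statement3_general hΩo hΩb hbelow (fun lam hlam => (hv1 lam (Ioo_subset_Icc_self hlam))
    |>.isClassicalSupersolution (fun _ _ _ _ => le_rfl) hχ0) hv0 hcont hderiv
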